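/- Let A be a unital C*-algebra, let I be a countable index set, and for each i ∈ I let π_i : A → B(H_i) and θ_i : A → B(K_i) be unital representations with π_i ≺ θ_i. Then ⊕_{i∈I} π_i ≺ ⊕_{i∈I} θ_i, where the direct sums act on the Hilbert space direct sums ⊕_{i∈I} H_i and ⊕_{i∈I} K_i respectively. -/

import Mathlib

open scoped InnerProductSpace

noncomputable section

/-- The space of unital representations of `A` on `H`, i.e. unital `*`-homomorphisms
`A → B(H)`. -/
abbrev CRep (A H : Type*) [CStarAlgebra A] [NormedAddCommGroup H]
    [InnerProductSpace ℂ H] [CompleteSpace H] : Type _ :=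
  A →⋆ₐ[ℂ] (H →L[ℂ] H)

/-- The point-strong operator topology on `CRep A H`: the topology of pointwise convergence
with `B(H)` carrying the strong operator topology (i.e. pointwise convergence on vectors). -/
instance CRep.instTopologicalSpace (A H : Type*) [CStarAlgebra A] [NormedAddCommGroup H]
    [InnerProductSpace ℂ H] [CompleteSpace H] : TopologicalSpace (CRep A H) :=
  TopologicalSpace.induced (fun π => (fun (a : A) (x : H) => π a x)) inferInstance

/-- A closed subspace `K` is invariant under a unital representation `π`. -/
def CRepInvariant {A H : Type*} [CStarAlgebra A] [NormedAddCommGroup H]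
    [InnerProductSpace ℂ H] [CompleteSpace H]
    (π : CRep A H) (K : Submodule ℂ H) : Prop :=
  ∀ a : A, ∀ x ∈ K, π a x ∈ K

/-- A unital representation is weakly mixing if it admits no nonzero finite-dimensional
closed invariant subspace. -/
def CRepWeaklyMixing {A H : Type*} [CStarAlgebra A] [NormedAddCommGroup H]
    [InnerProductSpace ℂ H] [CompleteSpace H]
    (π : CRep A H) : Prop :=
  ∀ K : Submodule ℂ H, IsClosed (K : Set H) → FiniteDimensional ℂ K →
    CRepInvariant π K → K = ⊥

/-- A unital representation is irreducible if its only closed invariant subspaces are `⊥`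
and the whole space. -/
def CRepIrreducible {A H : Type*} [CStarAlgebra A] [NormedAddCommGroup H]
    [InnerProductSpace ℂ H] [CompleteSpace H] (π : CRep A H) : Prop :=
  ∀ K : Submodule ℂ H, IsClosed (K : Set H) → (∀ a : A, ∀ x ∈ K, π a x ∈ K) →
    K = ⊥ ∨ K = ⊤

/-- The weak containment relation `π ≺ ρ`. -/
def CRepPrec {A H K : Type*} [CStarAlgebra A] [NormedAddCommGroup H]
    [InnerProductSpace ℂ H] [CompleteSpace H] [NormedAddCommGroup K]
    [InnerProductSpace ℂ K] [CompleteSpace K]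
    (π : CRep A H) (ρ : CRep A K) : Prop :=
  ∀ (Ω : Finset A) (n : ℕ) (ξ : Fin n → H), Orthonormal ℂ ξ → ∀ ε : ℝ, 0 < ε →
    ∃ ζ : Fin n → K, Orthonormal ℂ ζ ∧
      ∀ a ∈ Ω, ∀ i : Fin n, ‖⟪π a (ξ i), ξ i⟫_ℂ - ⟪ρ a (ζ i), ζ i⟫_ℂ‖ < ε


/-- `σ` realizes the Hilbert space direct sum of the family of representations `ρ i` via the
isometries `u i`: the ranges of the `u i` are pairwise orthogonal with dense span, and each
`u i` intertwines `ρ i` with `σ`. -/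
def IsDirectSumRep {A K : Type*} [CStarAlgebra A] [NormedAddCommGroup K]
    [InnerProductSpace ℂ K] [CompleteSpace K]
    {ι : Type*} {Hs : ι → Type*} [∀ i, NormedAddCommGroup (Hs i)]
    [∀ i, InnerProductSpace ℂ (Hs i)] [∀ i, CompleteSpace (Hs i)]
    (σ : CRep A K) (ρ : ∀ i, CRep A (Hs i))
    (u : ∀ i, Hs i →ₗᵢ[ℂ] K) : Prop :=
  (∀ i j, i ≠ j → ∀ (x : Hs i) (y : Hs j), ⟪u i x, u j y⟫_ℂ = 0) ∧
  (⨆ i, LinearMap.range (u i).toLinearMap).topologicalClosure = ⊤ ∧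
  (∀ i (a : A) (x : Hs i), σ a (u i x) = u i (ρ i a x))

/-!
Say that `θ` approximates the coefficients of `π` if all matrix coefficients `⟪v, π a w⟫` are
simultaneously limits of coefficients `⟪y v, θ a (y w)⟫` along a net of maps `y`. Approximations of
the summands combine to one of a direct sum, because coefficients between orthogonal summands
vanish on both sides. It remains to see that this property is equivalent to `π ≺ θ`. It implies
`π ≺ θ` since the Gram–Schmidt process moves an almost orthonormal family only slightly.

For the converse, take a maximal family `Q` of pairwise inequivalent minimal projections of finite
rank in `θ(A)`. If `π ≺ θ` and `q ∈ Q`, orthonormal families in the range of `π q` are at most as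
long as the rank of `θ q`, so the range of `π q` embeds isometrically into that of `θ q`. By
minimality and inequivalence these embeddings preserve all coefficients, which settles the
subrepresentation generated by the ranges of the `π q`. On its orthogonal complement every `π b`
with `θ b` of finite rank vanishes, by maximality of `Q`. A Hahn–Banach argument in the spirit of
Glimm's lemma shows that vector functionals of such a representation are limits of vector
functionals of `θ` along weakly null nets. Weakly null vectors are asymptotically orthogonal to
everything chosen before, so the approximation extends to one further vector at a time.
-/

open Filter Topology

section IteratedLimits

variable {α β X : Type*} {l : Filter α} {m : α → Filter β}

theorem neBot_bind (hl : l.NeBot) (hm : ∀ a, (m a).NeBot) : (l.bind m).NeBot := by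
  refine forall_mem_nonempty_iff_neBot.1 fun s hs => ?_
  obtain ⟨a, ha⟩ := hl.nonempty_of_mem (mem_bind'.1 hs)
  exact (hm a).nonempty_of_mem ha

theorem tendsto_bind_nhds [TopologicalSpace X] {f : β → X} {g : α → X} {c : X}
    (hf : ∀ᶠ a in l, Tendsto f (m a) (𝓝 (g a))) (hg : Tendsto g l (𝓝 c)) :
    Tendsto f (l.bind m) (𝓝 c) := by
  refine tendsto_nhds.2 fun s hs hc => mem_bind'.2 ?_
  filter_upwards [hf, hg (hs.mem_nhds hc)] with a hfa hga using hfa (hs.mem_nhds hga)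

end IteratedLimits

section Representations

variable {A H : Type*} [CStarAlgebra A]
  [NormedAddCommGroup H] [InnerProductSpace ℂ H] [CompleteSpace H] {π : CRep A H}

theorem CRep.inner_apply_left (π : CRep A H) (a : A) (x y : H) :
    ⟪π a x, y⟫_ℂ = ⟪x, π (star a) y⟫_ℂ := by
  rw [map_star, ContinuousLinearMap.star_eq_adjoint, ContinuousLinearMap.adjoint_inner_right]

theorem CRep.inner_apply_apply (π : CRep A H) (a b c : A) (x y : H) :
    ⟪π b x, π a (π c y)⟫_ℂ = ⟪x, π (star b * a * c) y⟫_ℂ := by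
  simp only [inner_apply_left, map_mul, mul_apply_eq_comp]

theorem CRep.inner_star_mul_self (π : CRep A H) (a : A) (x : H) :
    ⟪x, π (star a * a) x⟫_ℂ = ((‖π a x‖ ^ 2 : ℝ) : ℂ) := by
  rw [map_mul, mul_apply_eq_comp, ← inner_apply_left, inner_self_eq_norm_sq_to_K]
  norm_cast

theorem CRepInvariant.orthogonal {M : Submodule ℂ H} (hM : CRepInvariant π M) :
    CRepInvariant π Mᗮ := fun a x hx y hy => by
  rw [← star_star a, ← π.inner_apply_left]
  exact hx _ (hM _ y hy)

/-- The closed invariant subspace `[π(A) S]` generated by a set `S` of vectors. -/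
def CRep.cyclicHull (π : CRep A H) (S : Set H) : Submodule ℂ H :=
  (Submodule.span ℂ (Set.range fun p : A × S => π p.1 p.2)).topologicalClosure

variable {S : Set H} {M : Submodule ℂ H}

theorem CRep.isClosed_cyclicHull (π : CRep A H) (S : Set H) :
    IsClosed (π.cyclicHull S : Set H) :=
  Submodule.isClosed_topologicalClosure _

instance CRep.completeSpace_cyclicHull (π : CRep A H) (S : Set H) :
    CompleteSpace (π.cyclicHull S) :=
  (π.isClosed_cyclicHull S).completeSpace_coe

theorem CRep.subset_cyclicHull (π : CRep A H) (S : Set H) : S ⊆ π.cyclicHull S := fun s hs =>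
  Submodule.le_topologicalClosure _ <| Submodule.subset_span ⟨(1, ⟨s, hs⟩), by simp⟩

theorem CRep.cyclicHull_invariant (π : CRep A H) (S : Set H) :
    CRepInvariant π (π.cyclicHull S) := by
  refine fun a x hx => map_mem_closure (π a).continuous hx fun y hy => ?_
  induction hy using Submodule.span_induction with
  | mem y hy =>
    obtain ⟨⟨b, s⟩, rfl⟩ := hy
    exact Submodule.subset_span ⟨(a * b, s), by simp⟩
  | zero => simp
  | add y z _ _ hy hz => simpa using add_mem hy hz
  | smul c y _ hy => simpa using Submodule.smul_mem _ c hy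

theorem CRepInvariant.cyclicHull_le (hM : CRepInvariant π M) (hMc : IsClosed (M : Set H))
    (hS : S ⊆ M) : π.cyclicHull S ≤ M := by
  refine Submodule.topologicalClosure_minimal _ (Submodule.span_le.2 ?_) hMc
  rintro _ ⟨⟨a, s, hs⟩, rfl⟩
  exact hM a s (hS hs)

theorem CRep.cyclicHull_mono (π : CRep A H) {S T : Set H} (h : S ⊆ T) :
    π.cyclicHull S ≤ π.cyclicHull T :=
  (π.cyclicHull_invariant T).cyclicHull_le (π.isClosed_cyclicHull T)
    (h.trans (π.subset_cyclicHull T))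

end Representations

section CoefficientApproximation

variable {A H K ι κ : Type*} [CStarAlgebra A]
  [NormedAddCommGroup H] [InnerProductSpace ℂ H] [CompleteSpace H]
  [NormedAddCommGroup K] [InnerProductSpace ℂ K] [CompleteSpace K]

/-- All matrix coefficients of `π` along a family `v` of vectors are simultaneously limits of the
matrix coefficients of `θ` along families `y` of vectors. The net of families `y` is encoded by a
filter on the space of all families. -/
def CRep.CoeffApprox (π : CRep A H) (θ : CRep A K) (v : ι → H) : Prop :=
  ∃ l : Filter (ι → K), l.NeBot ∧
    ∀ a i j, Tendsto (fun y => ⟪y i, θ a (y j)⟫_ℂ) l (𝓝 ⟪v i, π a (v j)⟫_ℂ)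

namespace CRep.CoeffApprox

variable {π : CRep A H} {θ : CRep A K} {v : ι → H}

theorem of_tendsto {τ : Type*} {l : Filter τ} (hl : l.NeBot) (y : τ → ι → K)
    (h : ∀ a i j, Tendsto (fun t => ⟪y t i, θ a (y t j)⟫_ℂ) l (𝓝 ⟪v i, π a (v j)⟫_ℂ)) :
    CoeffApprox π θ v :=
  ⟨l.map y, hl.map y, fun a i j => tendsto_map'_iff.2 (h a i j)⟩

theorem of_inner_eq (y : ι → K) (h : ∀ a i j, ⟪y i, θ a (y j)⟫_ℂ = ⟪v i, π a (v j)⟫_ℂ) :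
    CoeffApprox π θ v :=
  ⟨pure y, pure_neBot, fun a i j => h a i j ▸ tendsto_pure_nhds (fun y => ⟪y i, θ a (y j)⟫_ℂ) y⟩

theorem comp (h : CoeffApprox π θ v) (f : κ → ι) : CoeffApprox π θ (v ∘ f) := by
  obtain ⟨l, hl, hlim⟩ := h
  exact of_tendsto hl (fun y => y ∘ f) fun a i j => hlim a (f i) (f j)

theorem of_tendsto_family {τ : Type*} {l : Filter τ} (hl : l.NeBot) {w : τ → ι → H}
    (hw : ∀ t, CoeffApprox π θ (w t))
    (hlim : ∀ a i j, Tendsto (fun t => ⟪w t i, π a (w t j)⟫_ℂ) l (𝓝 ⟪v i, π a (v j)⟫_ℂ)) :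
    CoeffApprox π θ v := by
  choose m hm hmlim using hw
  exact ⟨l.bind m, neBot_bind hl hm, fun a i j =>
    tendsto_bind_nhds (.of_forall fun t => hmlim t a i j) (hlim a i j)⟩

theorem orbit (h : CoeffApprox π θ v) :
    CoeffApprox π θ (fun p : A × ι => π p.1 (v p.2)) := by
  obtain ⟨l, hl, hlim⟩ := h
  refine of_tendsto hl (fun y p => θ p.1 (y p.2)) fun a p p' => ?_
  simpa only [inner_apply_apply] using hlim _ _ _

theorem linearCombination (h : CoeffApprox π θ v) :
    CoeffApprox π θ (Finsupp.linearCombination ℂ v) := by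
  obtain ⟨l, hl, hlim⟩ := h
  refine of_tendsto hl (fun y => Finsupp.linearCombination ℂ y) fun a c c' => ?_
  simp only [Finsupp.linearCombination_apply, map_finsuppSum, map_smul, Finsupp.sum_inner,
    Finsupp.inner_sum, inner_smul_left, inner_smul_right]
  exact tendsto_finsetSum _ fun j _ => (tendsto_finsetSum _ fun i _ =>
    (hlim a i j).const_mul _).const_mul _

theorem of_mem_closure_range (h : CoeffApprox π θ v) {w : κ → H}
    (hw : ∀ k, w k ∈ closure (Set.range v)) : CoeffApprox π θ w := by
  choose u hu hlim using fun k => mem_closure_iff_seq_limit.1 (hw k)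
  choose s hs using hu
  refine of_tendsto_family atTop_neBot (w := fun n k => v (s k n))
    (fun n => h.comp fun k => s k n) fun a i j => ?_
  simp only [hs]
  exact (hlim i).inner (((π a).continuous.tendsto _).comp (hlim j))

theorem of_mem_cyclicHull (h : CoeffApprox π θ v) {w : κ → H}
    (hw : ∀ k, w k ∈ π.cyclicHull (Set.range v)) : CoeffApprox π θ w := by
  refine h.orbit.linearCombination.of_mem_closure_range fun k => closure_mono ?_ (hw k)
  rw [← LinearMap.coe_range, Finsupp.range_linearCombination]
  refine Submodule.span_mono ?_
  rintro _ ⟨⟨a, _, i, rfl⟩, rfl⟩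
  exact ⟨(a, i), rfl⟩

theorem of_forall_finset (h : ∀ F : Finset ι, CoeffApprox π θ fun i : F => v i) :
    CoeffApprox π θ v := by
  classical
  refine of_tendsto_family atTop_neBot (w := fun F i => if i ∈ F then v i else 0)
    (fun F => (h F).of_mem_cyclicHull fun i => ?_) fun a i j => ?_
  · split_ifs with hi
    · exact π.subset_cyclicHull _ ⟨⟨i, hi⟩, rfl⟩
    · exact zero_mem _
  · refine tendsto_const_nhds.congr' ?_
    filter_upwards [eventually_ge_atTop {i, j}] with F hF
    rw [if_pos (hF (by simp)), if_pos (hF (by simp))]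

end CRep.CoeffApprox

end CoefficientApproximation

section WeakDualSeparation

variable {𝕜 E : Type*} [RCLike 𝕜] [AddCommGroup E] [Module 𝕜 E] [TopologicalSpace E]

theorem exists_forall_re_apply_nonneg_and_re_apply_neg (C : ProperCone ℝ (WeakDual 𝕜 E))
    {φ₀ : WeakDual 𝕜 E} (hφ₀ : φ₀ ∉ C) :
    ∃ a : E, (∀ φ ∈ C, 0 ≤ RCLike.re (φ a)) ∧ RCLike.re (φ₀ a) < 0 := by
  have : LocallyConvexSpace ℝ (WeakDual 𝕜 E) :=
    inferInstanceAs (LocallyConvexSpace ℝ (WeakBilin (topDualPairing 𝕜 E)))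
  have : IsScalarTower ℝ 𝕜 (WeakDual 𝕜 E) :=
    ⟨fun r c φ => DFunLike.ext _ _ fun a => smul_assoc r c (φ a)⟩
  obtain ⟨f, hf, hf₀⟩ := C.hyperplane_separation_point hφ₀
  obtain ⟨a, ha⟩ := (topDualPairing 𝕜 E).dualEmbedding_surjective (f.extendRCLike (𝕜 := 𝕜))
  have hre : ∀ φ : WeakDual 𝕜 E, RCLike.re (φ a) = f φ := fun φ => by
    rw [← StrongDual.re_extendRCLike_apply (𝕜 := 𝕜) f φ, ← ha]
    rfl
  exact ⟨a, fun φ hφ => (hf φ hφ).trans_eq (hre φ).symm, (hre φ₀).trans_lt hf₀⟩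

end WeakDualSeparation

section SingularFunctionals

variable {A H K : Type*} [CStarAlgebra A]
  [NormedAddCommGroup H] [InnerProductSpace ℂ H] [CompleteSpace H]
  [NormedAddCommGroup K] [InnerProductSpace ℂ K]

/-- The trace on `K` of the neighbourhood filter of `0` in the weak topology: a filter lies below
it if and only if it is weakly null. -/
def weakNhdsZero (K : Type*) [NormedAddCommGroup K] [InnerProductSpace ℂ K] : Filter K :=
  comap (fun z k => ⟪k, z⟫_ℂ) (𝓝 0)

theorem tendsto_weakNhdsZero_iff {τ : Type*} {l : Filter τ} {z : τ → K} :
    Tendsto z l (weakNhdsZero K) ↔ ∀ k, Tendsto (fun t => ⟪k, z t⟫_ℂ) l (𝓝 0) :=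
  tendsto_comap_iff.trans tendsto_pi_nhds

theorem tendsto_inner_right_of_le_weakNhdsZero {l : Filter K} (hl : l ≤ weakNhdsZero K) (k : K) :
    Tendsto (fun z => ⟪k, z⟫_ℂ) l (𝓝 0) :=
  tendsto_weakNhdsZero_iff.1 hl k

theorem tendsto_inner_left_of_le_weakNhdsZero {l : Filter K} (hl : l ≤ weakNhdsZero K) (k : K) :
    Tendsto (fun z => ⟪z, k⟫_ℂ) l (𝓝 0) := by
  simpa only [RCLike.star_def, inner_conj_symm, map_zero] using
    (tendsto_inner_right_of_le_weakNhdsZero hl k).star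

theorem exists_finset_of_eventually_weakNhdsZero {p : K → Prop}
    (h : ∀ᶠ z in weakNhdsZero K, p z) :
    ∃ F : Finset K, ∀ z, (∀ k ∈ F, ⟪k, z⟫_ℂ = 0) → p z := by
  obtain ⟨s, hs, hsp⟩ := mem_comap.1 h
  rw [nhds_pi, Filter.mem_pi] at hs
  obtain ⟨I, hI, t, ht, hts⟩ := hs
  refine ⟨hI.toFinset, fun z hz => hsp (hts fun k hk => ?_)⟩
  change ⟪k, z⟫_ℂ ∈ t k
  rw [hz k (hI.mem_toFinset.2 hk)]
  exact mem_of_mem_nhds (ht k)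

namespace CRep

variable [CompleteSpace K] (θ : CRep A K)

theorem norm_inner_apply_le (z : K) (a : A) : ‖⟪z, θ a z⟫_ℂ‖ ≤ ‖z‖ ^ 2 * ‖a‖ :=
  calc ‖⟪z, θ a z⟫_ℂ‖ ≤ ‖z‖ * ‖θ a z‖ := norm_inner_le_norm _ _
    _ ≤ ‖z‖ * (‖a‖ * ‖z‖) := by
      gcongr
      exact (θ a).le_of_opNorm_le (NonUnitalStarAlgHom.norm_apply_le θ a) z
    _ = ‖z‖ ^ 2 * ‖a‖ := by ring

/-- The positive functional `a ↦ ⟪z, θ a z⟫` as a point of the weak-* dual. -/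
def vectorFunctional (z : K) : WeakDual ℂ A :=
  StrongDual.toWeakDual <| LinearMap.mkContinuous
    { toFun := fun a => ⟪z, θ a z⟫_ℂ
      map_add' := fun a b => by simp
      map_smul' := fun c a => by simp } (‖z‖ ^ 2) (θ.norm_inner_apply_le z)

@[simp]
theorem vectorFunctional_apply (z : K) (a : A) : θ.vectorFunctional z a = ⟪z, θ a z⟫_ℂ := rfl

theorem norm_vectorFunctional_le (z : K) :
    ‖WeakDual.toStrongDual (θ.vectorFunctional z)‖ ≤ ‖z‖ ^ 2 :=
  LinearMap.mkContinuous_norm_le _ (by positivity) (θ.norm_inner_apply_le z)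

variable {θ} in
theorem tendsto_vectorFunctional_iff {τ : Type*} {l : Filter τ} {z : τ → K} {φ : WeakDual ℂ A} :
    Tendsto (fun t => θ.vectorFunctional (z t)) l (𝓝 φ) ↔
      ∀ a, Tendsto (fun t => ⟪z t, θ a (z t)⟫_ℂ) l (𝓝 (φ a)) :=
  tendsto_iff_forall_eval_tendsto_topDualPairing

theorem mapClusterPt_vectorFunctional_zero :
    MapClusterPt 0 (weakNhdsZero K) θ.vectorFunctional := by
  refine .of_comp (p := pure 0) (tendsto_weakNhdsZero_iff (z := id).2 fun k => ?_)
    (tendsto_vectorFunctional_iff (z := id).2 fun a => ?_).mapClusterPt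
  · simpa using tendsto_pure_nhds (fun z => ⟪k, z⟫_ℂ) (0 : K)
  · have h : (0 : WeakDual ℂ A) a = ⟪(0 : K), θ a 0⟫_ℂ := (inner_zero_left _).symm
    exact h ▸ tendsto_pure_nhds (fun z => ⟪z, θ a z⟫_ℂ) (0 : K)

variable {θ} in
theorem mapClusterPt_vectorFunctional_smul {φ : WeakDual ℂ A} {r : ℝ} (hr : 0 ≤ r)
    (hφ : MapClusterPt φ (weakNhdsZero K) θ.vectorFunctional) :
    MapClusterPt (r • φ) (weakNhdsZero K) θ.vectorFunctional := by
  obtain ⟨l, hl, hlφ⟩ := mapClusterPt_iff_ultrafilter.1 hφ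
  rw [tendsto_vectorFunctional_iff] at hlφ
  refine .of_comp (p := l) (φ := fun z => (√r : ℂ) • z) (tendsto_weakNhdsZero_iff.2 fun k => ?_)
    (tendsto_vectorFunctional_iff.2 fun a => ?_).mapClusterPt
  · simpa [inner_smul_right] using
      (tendsto_inner_right_of_le_weakNhdsZero hl k).const_mul (√r : ℂ)
  · have h : ∀ z, ⟪(√r : ℂ) • z, θ a ((√r : ℂ) • z)⟫_ℂ = r • ⟪z, θ a z⟫_ℂ := fun z => by
      rw [map_smul, inner_smul_left, inner_smul_right, ← mul_assoc, Complex.conj_ofReal,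
        ← Complex.ofReal_mul, Real.mul_self_sqrt hr, Complex.real_smul]
    simpa only [h] using! (hlφ a).const_smul r

variable {θ} in
theorem mapClusterPt_vectorFunctional_add {φ ψ : WeakDual ℂ A}
    (hφ : MapClusterPt φ (weakNhdsZero K) θ.vectorFunctional)
    (hψ : MapClusterPt ψ (weakNhdsZero K) θ.vectorFunctional) :
    MapClusterPt (φ + ψ) (weakNhdsZero K) θ.vectorFunctional := by
  obtain ⟨l, hl, hlφ⟩ := mapClusterPt_iff_ultrafilter.1 hφ
  obtain ⟨m, hm, hmψ⟩ := mapClusterPt_iff_ultrafilter.1 hψ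
  rw [tendsto_vectorFunctional_iff] at hlφ hmψ
  have : ((l : Filter K).bind fun x => (m : Filter K).map (x + ·)).NeBot :=
    neBot_bind l.neBot fun x => m.neBot.map _
  refine .of_comp (p := (l : Filter K).bind fun x => (m : Filter K).map (x + ·))
    (tendsto_weakNhdsZero_iff (z := id).2 fun k => ?_)
    (tendsto_vectorFunctional_iff (z := id).2 fun a => ?_).mapClusterPt
  · refine tendsto_bind_nhds (.of_forall fun x => tendsto_map'_iff.2 ?_)
      (tendsto_inner_right_of_le_weakNhdsZero hl k)
    simpa [inner_add_right, Function.comp_def] using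
      (tendsto_inner_right_of_le_weakNhdsZero hm k).const_add ⟪k, x⟫_ℂ
  · refine tendsto_bind_nhds (.of_forall fun x => tendsto_map'_iff.2 ?_)
      ((hlφ a).add_const (ψ a))
    have h := ((tendsto_inner_right_of_le_weakNhdsZero hm (θ (star a) x)).const_add
      ⟪x, θ a x⟫_ℂ).add ((tendsto_inner_left_of_le_weakNhdsZero hm (θ a x)).add (hmψ a))
    simpa [inner_add_left, inner_add_right, inner_apply_left, add_assoc, add_left_comm,
      Function.comp_def] using h

/-- The functionals that are limits of vector functionals of `θ` along weakly null nets. -/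
def singularCone : ProperCone ℝ (WeakDual ℂ A) where
  carrier := {φ | MapClusterPt φ (weakNhdsZero K) θ.vectorFunctional}
  zero_mem' := θ.mapClusterPt_vectorFunctional_zero
  add_mem' := mapClusterPt_vectorFunctional_add
  smul_mem' := fun r _ => mapClusterPt_vectorFunctional_smul r.2
  isClosed' := isClosed_setOfPred_clusterPt

variable {θ}

theorem exists_filter_of_mem_singularCone {φ : WeakDual ℂ A} (hφ : φ ∈ θ.singularCone) :
    ∃ l : Filter K, l.NeBot ∧ l ≤ weakNhdsZero K ∧
      ∀ a, Tendsto (fun z => ⟪z, θ a z⟫_ℂ) l (𝓝 (φ a)) := by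
  obtain ⟨l, hl, hlφ⟩ := mapClusterPt_iff_ultrafilter.1 hφ
  exact ⟨l, l.neBot, hl, tendsto_vectorFunctional_iff.1 hlφ⟩

theorem eventually_weakNhdsZero_re_inner_ge {a : A} (ha : ∀ φ ∈ θ.singularCone, 0 ≤ (φ a).re)
    {s : ℝ} (hs : 0 < s) :
    ∀ᶠ z in weakNhdsZero K, ‖z‖ ≤ 1 → -s ≤ (⟪z, θ a z⟫_ℂ).re := by
  by_contra hcon
  let S : Set (WeakDual ℂ A) :=
    WeakDual.toStrongDual ⁻¹' Metric.closedBall 0 1 ∩ {φ | (φ a).re ≤ -s}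
  have hS : IsCompact S := (WeakDual.isCompact_closedBall (0 : StrongDual ℂ A) 1).inter_right <|
    isClosed_le (Complex.continuous_re.comp (WeakDual.eval_continuous a)) continuous_const
  obtain ⟨φ, ⟨-, hφ⟩, hmem⟩ : ∃ φ ∈ S, φ ∈ θ.singularCone := by
    refine hS.exists_mapClusterPt_of_frequently ((not_eventually.1 hcon).mono fun z hz => ?_)
    obtain ⟨hz, hlt⟩ := Classical.not_imp.1 hz
    refine ⟨?_, (not_le.1 hlt).le⟩
    simpa using (θ.norm_vectorFunctional_le z).trans (pow_le_one₀ (norm_nonneg z) hz)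
  linarith [ha φ hmem, show (φ a).re ≤ -s from hφ]

theorem CoeffApprox.option {π : CRep A H} {ι : Type*} {v : ι → H} (h : CoeffApprox π θ v) {x : H}
    (horth : ∀ a i, ⟪v i, π a x⟫_ℂ = 0) (hx : π.vectorFunctional x ∈ θ.singularCone) :
    CoeffApprox π θ fun o : Option ι => o.elim x v := by
  obtain ⟨l, hl, hlv⟩ := h
  obtain ⟨m, hm, hm0, hmx⟩ := exists_filter_of_mem_singularCone hx
  have horth' : ∀ a i, ⟪x, π a (v i)⟫_ℂ = 0 := fun a i => by
    rw [← inner_conj_symm, inner_apply_left, horth, map_zero]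
  refine ⟨l.bind fun y => m.map fun z o => o.elim z y, neBot_bind hl fun y => hm.map _,
    fun a o o' => tendsto_bind_nhds (g := fun y => ⟪o.elim 0 y, θ a (o'.elim 0 y)⟫_ℂ +
      ⟪o.elim x 0, π a (o'.elim x 0)⟫_ℂ) (.of_forall fun y => tendsto_map'_iff.2 ?_) ?_⟩
  · cases o <;> cases o'
    · simpa [Function.comp_def] using hmx a
    · simpa [Function.comp_def] using tendsto_inner_left_of_le_weakNhdsZero hm0 (θ a (y _))
    · simpa [Function.comp_def, inner_apply_left] using
        tendsto_inner_right_of_le_weakNhdsZero hm0 (θ (star a) (y _))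
    · simp [Function.comp_def]
  · cases o <;> cases o' <;> simp [horth, horth', hlv]

theorem CoeffApprox.cyclicHull_insert {π : CRep A H} {S : Set H}
    (h : CoeffApprox π θ (Subtype.val : π.cyclicHull S → H))
    (hS : ∀ η ∈ (π.cyclicHull S)ᗮ, π.vectorFunctional η ∈ θ.singularCone) (x : H) :
    CoeffApprox π θ (Subtype.val : π.cyclicHull (insert x S) → H) := by
  set M := π.cyclicHull S
  have hη : x - M.starProjection x ∈ Mᗮ := M.sub_starProjection_mem_orthogonal x
  have horth : ∀ a (y : M), ⟪(y : H), π a (x - M.starProjection x)⟫_ℂ = 0 := fun a y =>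
    (π.cyclicHull_invariant S).orthogonal a _ hη _ y.2
  refine (h.option horth (hS _ hη)).of_mem_cyclicHull fun w =>
    (π.cyclicHull_invariant _).cyclicHull_le (π.isClosed_cyclicHull _)
      (Set.insert_subset ?_ fun s hs => ?_) w.2
  · convert! add_mem (π.subset_cyclicHull _ (Set.mem_range_self none))
      (π.subset_cyclicHull _ (Set.mem_range_self (some (M.orthogonalProjectionOnto x))))
    exact (sub_add_cancel x (M.starProjection x)).symm
  · exact π.subset_cyclicHull _ ⟨some ⟨s, π.subset_cyclicHull S hs⟩, rfl⟩

end CRep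

end SingularFunctionals

section FiniteRank

open scoped ComplexStarModule

theorem exists_eq_mul_self_sub_mul_self {A : Type*} [TopologicalSpace A] [Ring A] [StarRing A]
    [Algebra ℝ A] [ContinuousFunctionalCalculus ℝ A IsSelfAdjoint] {b : A}
    (hb : IsSelfAdjoint b) :
    ∃ e d : A, IsSelfAdjoint e ∧ IsSelfAdjoint d ∧ e * d = 0 ∧ b = e * e - d * d := by
  refine ⟨cfc (fun x : ℝ => √x) b, cfc (fun x : ℝ => √(-x)) b, cfc_predicate _ b,
    cfc_predicate _ b, ?_, ?_⟩
  · rw [← cfc_mul _ _ b, ← cfc_const_zero ℝ b]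
    refine cfc_congr fun x _ => ?_
    rcases le_total x 0 with hx | hx
    · simp [Real.sqrt_eq_zero_of_nonpos hx]
    · simp [Real.sqrt_eq_zero_of_nonpos (neg_nonpos.2 hx)]
  · rw [← cfc_mul _ _ b, ← cfc_mul _ _ b, ← cfc_sub _ _ b]
    conv_lhs => rw [← cfc_id' ℝ b]
    refine cfc_congr fun x _ => ?_
    rcases le_total x 0 with hx | hx
    · simp [Real.sqrt_eq_zero_of_nonpos hx, Real.mul_self_sqrt (neg_nonneg.2 hx)]
    · simp [Real.sqrt_eq_zero_of_nonpos (neg_nonpos.2 hx), Real.mul_self_sqrt hx]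

variable {A H K : Type*} [CStarAlgebra A]
  [NormedAddCommGroup H] [InnerProductSpace ℂ H] [CompleteSpace H]
  [NormedAddCommGroup K] [InnerProductSpace ℂ K] [CompleteSpace K]

namespace CRep

theorem inner_mul_self_of_isSelfAdjoint (π : CRep A H) {e : A} (he : IsSelfAdjoint e) (x : H) :
    ⟪x, π (e * e) x⟫_ℂ = ((‖π e x‖ ^ 2 : ℝ) : ℂ) := by
  rw [← π.inner_star_mul_self, he.star_eq]

theorem re_inner_realPart_add_smul_one (π : CRep A H) (a : A) (s : ℝ) (x : H) :
    (⟪x, π ((ℜ a : A) + s • 1) x⟫_ℂ).re = (⟪x, π a x⟫_ℂ).re + s * ‖x‖ ^ 2 := by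
  have hstar : (⟪x, π (star a) x⟫_ℂ).re = (⟪x, π a x⟫_ℂ).re := by
    rw [← inner_apply_left, ← inner_conj_symm, Complex.conj_re]
  have hnorm : (⟪x, x⟫_ℂ).re = ‖x‖ ^ 2 := inner_self_eq_norm_sq (𝕜 := ℂ) x
  simp only [realPart_apply_coe, ← Complex.coe_smul, map_add, map_smul, map_one, add_apply,
    smul_apply, one_apply_eq_self, inner_add_right, inner_smul_right, Complex.add_re,
    Complex.re_ofReal_mul, hstar, hnorm]
  ring

/-- The operator `θ b` has finite rank. -/
def FiniteRank (θ : CRep A K) (b : A) : Prop :=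
  FiniteDimensional ℂ (θ b).range

variable {θ : CRep A K}

theorem finiteRank_of_forall_inner_eq_zero {b : A} (F : Finset K)
    (h : ∀ x, (∀ k ∈ F, ⟪k, θ b x⟫_ℂ = 0) → θ b x = 0) : θ.FiniteRank b := by
  let g : K →ₗ[ℂ] (F → ℂ) := LinearMap.pi fun k => (innerSL ℂ (k : K) : K →ₗ[ℂ] ℂ)
  refine FiniteDimensional.of_injective (g.comp (θ b).range.subtype) ?_
  rw [injective_iff_map_eq_zero]
  rintro ⟨_, x, rfl⟩ hx
  refine Subtype.ext (h x fun k hk => ?_)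
  simpa [g] using congrFun hx ⟨k, hk⟩

theorem exists_finset_re_inner_ge {a : A} (ha : ∀ φ ∈ θ.singularCone, 0 ≤ (φ a).re)
    {s : ℝ} (hs : 0 < s) :
    ∃ F : Finset K, ∀ z, (∀ k ∈ F, ⟪k, z⟫_ℂ = 0) → -(s * ‖z‖ ^ 2) ≤ (⟪z, θ a z⟫_ℂ).re := by
  obtain ⟨F, hF⟩ := exists_finset_of_eventually_weakNhdsZero
    (eventually_weakNhdsZero_re_inner_ge ha hs)
  refine ⟨F, fun z hz => ?_⟩
  obtain rfl | hz0 := eq_or_ne z 0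
  · simp
  have hpos : 0 < ‖z‖ := norm_pos_iff.2 hz0
  have hunit : ‖((‖z‖⁻¹ : ℝ) : ℂ) • z‖ ≤ 1 := by
    rw [norm_smul, Complex.norm_real, norm_inv, norm_norm, inv_mul_cancel₀ hpos.ne']
  have hge := hF (((‖z‖⁻¹ : ℝ) : ℂ) • z) (fun k hk => by rw [inner_smul_right, hz k hk, mul_zero])
    hunit
  rw [map_smul, inner_smul_left, inner_smul_right, Complex.conj_ofReal, Complex.re_ofReal_mul,
    Complex.re_ofReal_mul, le_inv_mul_iff₀ hpos, le_inv_mul_iff₀ hpos] at hge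
  linarith

/-- Write `ℜ a + s = e² - d²` with `e d = 0`. Positivity of `a` on the singular cone makes
`ℜ a + s` nonnegative on a subspace of finite codimension, so that `d` has finite rank. -/
theorem re_inner_ge_of_forall_finiteRank (π : CRep A H) {a : A}
    (ha : ∀ φ ∈ θ.singularCone, 0 ≤ (φ a).re) {v : H} (hv : ∀ b, θ.FiniteRank b → π b v = 0)
    {s : ℝ} (hs : 0 < s) : -(s * ‖v‖ ^ 2) ≤ (⟪v, π a v⟫_ℂ).re := by
  have hsa : IsSelfAdjoint ((ℜ a : A) + s • (1 : A)) :=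
    (ℜ a).2.add (.smul (.all s) (.one A))
  obtain ⟨e, d, he, hd, hed, hb⟩ := exists_eq_mul_self_sub_mul_self hsa
  obtain ⟨F, hF⟩ := exists_finset_re_inner_ge ha hs
  have hrank : θ.FiniteRank d := finiteRank_of_forall_inner_eq_zero F fun x hx => by
    have hneg : (⟪θ d x, θ ((ℜ a : A) + s • 1) (θ d x)⟫_ℂ).re = -‖θ d (θ d x)‖ ^ 2 := by
      have hzero : θ e (θ d x) = 0 := by
        rw [← mul_apply_eq_comp, ← map_mul, hed, map_zero, zero_apply]
      rw [hb, map_sub, sub_apply, inner_sub_right, inner_mul_self_of_isSelfAdjoint _ he,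
        inner_mul_self_of_isSelfAdjoint _ hd, hzero, Complex.sub_re, Complex.ofReal_re,
        Complex.ofReal_re, norm_zero]
      ring
    have hdd : θ d (θ d x) = 0 := by
      rw [re_inner_realPart_add_smul_one] at hneg
      have hsq : ‖θ d (θ d x)‖ ^ 2 ≤ 0 := by linarith [hF _ hx]
      simpa using hsq.antisymm (sq_nonneg _)
    have hnorm := θ.inner_mul_self_of_isSelfAdjoint hd x
    rw [map_mul, mul_apply_eq_comp, hdd, inner_zero_right] at hnorm
    simpa using Complex.ofReal_eq_zero.1 hnorm.symm
  have hre := π.re_inner_realPart_add_smul_one a s v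
  rw [hb, map_sub, sub_apply, inner_sub_right, inner_mul_self_of_isSelfAdjoint _ he,
    inner_mul_self_of_isSelfAdjoint _ hd, hv d hrank, Complex.sub_re, Complex.ofReal_re,
    Complex.ofReal_re, norm_zero] at hre
  nlinarith [sq_nonneg ‖π e v‖]

theorem vectorFunctional_mem_singularCone (π : CRep A H) (θ : CRep A K) {v : H}
    (hv : ∀ b, θ.FiniteRank b → π b v = 0) : π.vectorFunctional v ∈ θ.singularCone := by
  by_contra hmem
  obtain ⟨a, ha, hlt⟩ := exists_forall_re_apply_nonneg_and_re_apply_neg θ.singularCone hmem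
  have hlim : Tendsto (fun s : ℝ => -(s * ‖v‖ ^ 2)) (𝓝[>] 0) (𝓝 0) :=
    ((continuous_id.mul_const _).neg.tendsto' 0 0 (by simp)).mono_left nhdsWithin_le_nhds
  refine hlt.not_ge (le_of_tendsto hlim ?_)
  filter_upwards [self_mem_nhdsWithin] with s hs
  exact re_inner_ge_of_forall_finiteRank π ha hv hs

end CRep

end FiniteRank

section InnerProductSpace

open Module (finrank)
open Module.End (HasEigenvalue eigenspace)

theorem finrank_range_sub_smul_one_lt {𝕜 V : Type*} [Field 𝕜] [AddCommGroup V] [Module 𝕜 V]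
    [FiniteDimensional 𝕜 V] {T : Module.End 𝕜 V} {ν : 𝕜} (hν : HasEigenvalue T ν) :
    finrank 𝕜 (LinearMap.range (T - ν • 1)) < finrank 𝕜 V := by
  obtain ⟨x, hx⟩ := hν.exists_hasEigenvector
  have hker : LinearMap.ker (T - ν • 1) ≠ ⊥ :=
    (Submodule.ne_bot_iff _).2 ⟨x, by simp [hx.apply_eq_smul], hx.2⟩
  have hdim := LinearMap.finrank_range_add_finrank_ker (T - ν • 1)
  have hpos := Submodule.one_le_finrank_iff.2 hker
  omega

theorem apply_eq_self_of_mem_range {R M : Type*} [Semiring R] [TopologicalSpace M]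
    [AddCommMonoid M] [Module R M] {T : M →L[R] M} (hT : IsIdempotentElem T) {x : M}
    (hx : x ∈ T.range) : T x = x := by
  obtain ⟨y, rfl⟩ := hx
  exact DFunLike.congr_fun hT y

variable {𝕜 E F : Type*} [RCLike 𝕜] [NormedAddCommGroup E] [InnerProductSpace 𝕜 E]
  [NormedAddCommGroup F] [InnerProductSpace 𝕜 F]

theorem norm_inner_sub_inner_comm (x y : E) (x' y' : F) :
    ‖⟪x, y⟫_𝕜 - ⟪x', y'⟫_𝕜‖ = ‖⟪y, x⟫_𝕜 - ⟪y', x'⟫_𝕜‖ := by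
  rw [← inner_conj_symm, ← inner_conj_symm x', ← map_sub, RCLike.norm_conj]

theorem exists_real_forall_apply_eq_smul [FiniteDimensional 𝕜 E] {T : E →ₗ[𝕜] E}
    (hT : T.IsSymmetric) (h : ∀ μ ν, HasEigenvalue T μ → HasEigenvalue T ν → μ = ν) :
    ∃ r : ℝ, ∀ x, T x = (r : 𝕜) • x := by
  obtain ⟨r, hr⟩ : ∃ r : ℝ, ∀ μ, HasEigenvalue T μ → μ = r := by
    by_cases hex : ∃ ν, HasEigenvalue T ν
    · obtain ⟨ν, hν⟩ := hex
      refine ⟨RCLike.re ν, fun μ hμ => (h μ ν hμ hν).trans ?_⟩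
      exact (RCLike.conj_eq_iff_re.1 (hT.conj_eigenvalue_eq_self hν)).symm
    · exact ⟨0, fun μ hμ => absurd ⟨μ, hμ⟩ hex⟩
  have htop : ⨆ μ, eigenspace T μ = ⊤ :=
    Submodule.orthogonal_eq_bot_iff.1 hT.orthogonalComplement_iSup_eigenspaces_eq_bot
  have hle : ⨆ μ, eigenspace T μ ≤ eigenspace T (r : 𝕜) := iSup_le fun μ => by
    by_cases hμ : HasEigenvalue T μ
    · rw [hr μ hμ]
    · rw [HasEigenvalue, Module.End.HasUnifEigenvalue, not_not] at hμ
      exact hμ.le.trans bot_le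
  exact ⟨r, fun x => Module.End.mem_eigenspace_iff.1 (hle (htop ▸ Submodule.mem_top))⟩

theorem nonempty_linearIsometry_of_finrank_le [FiniteDimensional 𝕜 E] [FiniteDimensional 𝕜 F]
    (h : finrank 𝕜 E ≤ finrank 𝕜 F) : Nonempty (E →ₗᵢ[𝕜] F) := by
  let b := stdOrthonormalBasis 𝕜 E
  let f : E →ₗ[𝕜] F := b.toBasis.constr 𝕜 (stdOrthonormalBasis 𝕜 F ∘ Fin.castLE h)
  have hf : f ∘ b.toBasis = stdOrthonormalBasis 𝕜 F ∘ Fin.castLE h :=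
    funext fun i => b.toBasis.constr_basis 𝕜 _ i
  refine ⟨f.isometryOfOrthonormal (v := b.toBasis) (by simp [b.orthonormal]) ?_⟩
  rw [hf]
  exact (stdOrthonormalBasis 𝕜 F).orthonormal.comp _ (Fin.castLE_injective h)

theorem rank_le_of_forall_orthonormal {n : ℕ}
    (h : ∀ (m : ℕ) (ξ : Fin m → E), Orthonormal 𝕜 ξ → m ≤ n) : Module.rank 𝕜 E ≤ n :=
  rank_le fun s hs => h s.card _ <| InnerProductSpace.gramSchmidtNormed_orthonormal <|
    hs.comp _ s.equivFin.symm.injective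

theorem sum_norm_sq_starProjection_le {ι : Type*} [Fintype ι] {ζ : ι → E} (hζ : Orthonormal 𝕜 ζ)
    (U : Submodule 𝕜 E) [FiniteDimensional 𝕜 U] :
    ∑ i, ‖U.starProjection (ζ i)‖ ^ 2 ≤ finrank 𝕜 U := by
  let b := stdOrthonormalBasis 𝕜 U
  have hparseval : ∀ x : E, ‖U.starProjection x‖ ^ 2 = ∑ j, ‖⟪x, (b j : E)⟫_𝕜‖ ^ 2 := fun x => by
    have hnorm := b.sum_sq_norm_inner_left (U.orthogonalProjectionOnto x)
    simpa using hnorm.symm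
  calc ∑ i, ‖U.starProjection (ζ i)‖ ^ 2
    _ = ∑ j, ∑ i, ‖⟪ζ i, (b j : E)⟫_𝕜‖ ^ 2 := by
      simp only [hparseval]
      exact Finset.sum_comm
    _ ≤ ∑ j, ‖(b j : E)‖ ^ 2 := Finset.sum_le_sum fun j _ => hζ.sum_inner_products_le _
    _ = finrank 𝕜 U := by
      have hnorm : ∀ j, ‖(b j : E)‖ = 1 := b.orthonormal.1
      simp [hnorm]

theorem card_le_finrank_of_sum_lt_one {ι : Type*} [Fintype ι] {ζ : ι → E}
    (hζ : Orthonormal 𝕜 ζ) (U : Submodule 𝕜 E) [FiniteDimensional 𝕜 U]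
    (h : ∑ i, (1 - ‖U.starProjection (ζ i)‖ ^ 2) < 1) : Fintype.card ι ≤ finrank 𝕜 U := by
  have hle := sum_norm_sq_starProjection_le hζ U
  rw [Finset.sum_sub_distrib, Finset.sum_const, Finset.card_univ, nsmul_one] at h
  have hlt : (Fintype.card ι : ℝ) < finrank 𝕜 U + 1 := by linarith
  exact Nat.lt_succ_iff.1 (by exact_mod_cast hlt)

end InnerProductSpace

section Perturbation

variable {𝕜 E τ : Type*} [RCLike 𝕜] [NormedAddCommGroup E] [InnerProductSpace 𝕜 E] {l : Filter τ}

theorem tendsto_norm_of_tendsto_sub {E : Type*} [SeminormedAddCommGroup E] {f h : τ → E} {c : ℝ}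
    (hf : Tendsto (fun t => ‖f t‖) l (𝓝 c)) (hfh : Tendsto (fun t => h t - f t) l (𝓝 0)) :
    Tendsto (fun t => ‖h t‖) l (𝓝 c) := by
  have hdiff : Tendsto (fun t => ‖h t‖ - ‖f t‖) l (𝓝 0) :=
    squeeze_zero_norm (fun t => abs_norm_sub_norm_le (h t) (f t)) (by simpa using hfh.norm)
  simpa using hdiff.add hf

theorem tendsto_norm_of_tendsto_inner_self {f : τ → E}
    (hf : Tendsto (fun t => ⟪f t, f t⟫_𝕜) l (𝓝 1)) : Tendsto (fun t => ‖f t‖) l (𝓝 1) := by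
  simpa [inner_self_eq_norm_sq_to_K] using hf.norm.sqrt

theorem tendsto_inner_apply_of_tendsto_sub (T : E →L[𝕜] E) {f h : τ → E} {c : ℝ} {d : 𝕜}
    (hf : Tendsto (fun t => ‖f t‖) l (𝓝 c)) (hfh : Tendsto (fun t => h t - f t) l (𝓝 0))
    (hT : Tendsto (fun t => ⟪f t, T (f t)⟫_𝕜) l (𝓝 d)) :
    Tendsto (fun t => ⟪h t, T (h t)⟫_𝕜) l (𝓝 d) := by
  have hbound : ∀ t, ‖⟪h t, T (h t)⟫_𝕜 - ⟪f t, T (f t)⟫_𝕜‖ ≤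
      ‖h t - f t‖ * (‖T‖ * ‖h t‖) + ‖f t‖ * (‖T‖ * ‖h t - f t‖) := fun t =>
    calc ‖⟪h t, T (h t)⟫_𝕜 - ⟪f t, T (f t)⟫_𝕜‖
      _ = ‖⟪h t - f t, T (h t)⟫_𝕜 + ⟪f t, T (h t - f t)⟫_𝕜‖ := by
        rw [map_sub, inner_sub_left, inner_sub_right, sub_add_sub_cancel]
      _ ≤ ‖h t - f t‖ * ‖T (h t)‖ + ‖f t‖ * ‖T (h t - f t)‖ :=
        (norm_add_le _ _).trans <| add_le_add (norm_inner_le_norm _ _) (norm_inner_le_norm _ _)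
      _ ≤ _ := by gcongr <;> exact T.le_opNorm _
  have hlim := (hfh.norm.mul ((tendsto_norm_of_tendsto_sub hf hfh).const_mul ‖T‖)).add
    (hf.mul (hfh.norm.const_mul ‖T‖))
  simp only [norm_zero, mul_zero, zero_mul, add_zero] at hlim
  simpa using (squeeze_zero_norm hbound hlim).add hT

open InnerProductSpace (gramSchmidt gramSchmidtNormed gramSchmidt_def)

variable {ι : Type*} [LinearOrder ι] [LocallyFiniteOrderBot ι] [WellFoundedLT ι] {f : τ → ι → E}

theorem tendsto_gramSchmidt_sub
    (hf : ∀ i j, Tendsto (fun t => ⟪f t i, f t j⟫_𝕜) l (𝓝 (if i = j then 1 else 0))) (i : ι) :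
    Tendsto (fun t => gramSchmidt 𝕜 (f t) i - f t i) l (𝓝 0) := by
  have hnorm : ∀ i, Tendsto (fun t => ‖f t i‖) l (𝓝 1) := fun i =>
    tendsto_norm_of_tendsto_inner_self (by simpa using hf i i)
  induction i using WellFoundedLT.induction with
  | ind i ih =>
  have hterm : ∀ j ∈ Finset.Iio i, Tendsto
      (fun t => (𝕜 ∙ gramSchmidt 𝕜 (f t) j).starProjection (f t i)) l (𝓝 0) := fun j hj => by
    have hji : j < i := Finset.mem_Iio.1 hj
    have hn := tendsto_norm_of_tendsto_sub (hnorm j) (ih j hji)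
    have hdiff : Tendsto (fun t => ⟪gramSchmidt 𝕜 (f t) j - f t j, f t i⟫_𝕜) l (𝓝 0) :=
      squeeze_zero_norm (fun t => norm_inner_le_norm _ _)
        (by simpa using (ih j hji).norm.mul (hnorm i))
    have hin : Tendsto (fun t => ⟪gramSchmidt 𝕜 (f t) j, f t i⟫_𝕜) l (𝓝 0) := by
      simpa [hji.ne, inner_sub_left] using hdiff.add (hf j i)
    have hlim := (hin.norm.div (hn.pow 2) (by simp)).mul hn
    rw [norm_zero, zero_div, zero_mul] at hlim
    refine tendsto_zero_iff_norm_tendsto_zero.2 (hlim.congr fun t => ?_)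
    simp [Submodule.starProjection_singleton, norm_smul]
  have hsum := (tendsto_finsetSum _ hterm).neg
  rw [Finset.sum_const_zero, neg_zero] at hsum
  refine hsum.congr fun t => ?_
  rw [gramSchmidt_def, sub_sub_cancel_left]

theorem tendsto_gramSchmidtNormed_sub
    (hf : ∀ i j, Tendsto (fun t => ⟪f t i, f t j⟫_𝕜) l (𝓝 (if i = j then 1 else 0))) (i : ι) :
    Tendsto (fun t => gramSchmidtNormed 𝕜 (f t) i - f t i) l (𝓝 0) := by
  have hgs := tendsto_gramSchmidt_sub hf i
  have hnorm := tendsto_norm_of_tendsto_sub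
    (tendsto_norm_of_tendsto_inner_self (𝕜 := 𝕜) (by simpa using hf i i)) hgs
  have hlim := ((hnorm.inv₀ one_ne_zero).sub_const 1).norm.mul hnorm
  rw [inv_one, sub_self, norm_zero, zero_mul] at hlim
  have hnormed : Tendsto (fun t => gramSchmidtNormed 𝕜 (f t) i - gramSchmidt 𝕜 (f t) i) l
      (𝓝 0) := by
    refine tendsto_zero_iff_norm_tendsto_zero.2 (hlim.congr fun t => ?_)
    have hscale : gramSchmidtNormed 𝕜 (f t) i - gramSchmidt 𝕜 (f t) i =
        ((‖gramSchmidt 𝕜 (f t) i‖⁻¹ - 1 : ℝ) : 𝕜) • gramSchmidt 𝕜 (f t) i := by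
      simp [gramSchmidtNormed, sub_smul]
    rw [hscale, norm_smul, RCLike.norm_ofReal, Real.norm_eq_abs]
  simpa using hnormed.add hgs

theorem eventually_orthonormal_gramSchmidtNormed [Finite ι]
    (hf : ∀ i j, Tendsto (fun t => ⟪f t i, f t j⟫_𝕜) l (𝓝 (if i = j then 1 else 0))) :
    ∀ᶠ t in l, Orthonormal 𝕜 (gramSchmidtNormed 𝕜 (f t)) := by
  have hne : ∀ᶠ t in l, ∀ i, gramSchmidtNormed 𝕜 (f t) i ≠ 0 := eventually_all.2 fun i => by
    have hnorm := tendsto_norm_of_tendsto_sub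
      (tendsto_norm_of_tendsto_inner_self (𝕜 := 𝕜) (by simpa using hf i i))
      (tendsto_gramSchmidtNormed_sub hf i)
    filter_upwards [hnorm.eventually_ne one_ne_zero] with t ht using norm_ne_zero_iff.1 ht
  filter_upwards [hne] with t ht
  exact (InnerProductSpace.gramSchmidtNormed_orthonormal' (f t)).comp (fun i => ⟨i, ht i⟩)
    fun i j hij => congrArg Subtype.val hij

end Perturbation

section MinimalProjection

open Module (finrank)
open Module.End (HasEigenvalue)
open scoped ComplexStarModule

variable {A H K : Type*} [CStarAlgebra A]
  [NormedAddCommGroup H] [InnerProductSpace ℂ H] [CompleteSpace H]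
  [NormedAddCommGroup K] [InnerProductSpace ℂ K] [CompleteSpace K]
  {π : CRep A H} {θ : CRep A K}

namespace CRep

theorem range_apply_mul (θ : CRep A K) (c b : A) :
    (θ (c * b)).range = (θ b).range.map (θ c : K →ₗ[ℂ] K) := by
  rw [← LinearMap.range_comp, map_mul]
  rfl

theorem FiniteRank.mul_left {b : A} (hb : θ.FiniteRank b) (c : A) : θ.FiniteRank (c * b) := by
  rw [FiniteRank, range_apply_mul]
  have : FiniteDimensional ℂ (θ b).range := hb
  infer_instance

theorem FiniteRank.finrank_mul_le {b : A} (hb : θ.FiniteRank b) (c : A) :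
    finrank ℂ (θ (c * b)).range ≤ finrank ℂ (θ b).range := by
  have : FiniteDimensional ℂ (θ b).range := hb
  rw [range_apply_mul]
  exact Submodule.finrank_map_le _ _

theorem exists_real_smul_of_minimal_finrank {q : A} {η : H} (hq : θ.FiniteRank q)
    (hmin : ∀ b, θ.FiniteRank b → finrank ℂ (θ b).range < finrank ℂ (θ q).range → π b η = 0)
    (hη : π q η ≠ 0) {a : A} (ha : IsSelfAdjoint a) (hinv : ∀ x, θ a (θ q x) ∈ (θ q).range) :
    ∃ r : ℝ, θ (a * q) = (r : ℂ) • θ q := by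
  have : FiniteDimensional ℂ (θ q).range := hq
  have hmaps : ∀ x ∈ (θ q).range, (θ a : K →ₗ[ℂ] K) x ∈ (θ q).range := by
    rintro _ ⟨x, rfl⟩
    exact hinv x
  let T := (θ a : K →ₗ[ℂ] K).restrict hmaps
  have hT : T.IsSymmetric := fun x y => by
    change ⟪θ a x, (y : K)⟫_ℂ = ⟪(x : K), θ a y⟫_ℂ
    rw [inner_apply_left, ha.star_eq]
  have heigen : ∀ μ, HasEigenvalue T μ → π a (π q η) = μ • π q η := fun μ hμ => by
    have hle : (θ ((a - μ • 1) * q)).range ≤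
        (LinearMap.range (T - μ • 1)).map (θ q).range.subtype := by
      rintro _ ⟨x, rfl⟩
      exact ⟨_, ⟨⟨θ q x, x, rfl⟩, rfl⟩, by simp [T, map_sub]⟩
    have hlt := ((Submodule.finrank_mono hle).trans (Submodule.finrank_map_le _ _)).trans_lt
      (finrank_range_sub_smul_one_lt hμ)
    simpa [map_sub, sub_eq_zero] using hmin _ (hq.mul_left _) hlt
  obtain ⟨r, hr⟩ := exists_real_forall_apply_eq_smul hT fun μ ν hμ hν =>
    smul_left_injective ℂ hη ((heigen μ hμ).symm.trans (heigen ν hν))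
  refine ⟨r, ContinuousLinearMap.ext fun x => ?_⟩
  rw [map_mul]
  exact congrArg Subtype.val (hr ⟨θ q x, x, rfl⟩)

/-- The operator `θ q` is a finite rank projection which is minimal in `θ(A)`, in the sense that
`θ(q) θ(A) θ(q) = ℂ θ(q)`. -/
structure IsMinimalProjection (θ : CRep A K) (q : A) : Prop where
  isStarProjection : IsStarProjection (θ q)
  finiteRank : θ.FiniteRank q
  exists_smul : ∀ a, ∃ c : ℂ, θ (q * a * q) = c • θ q

theorem exists_isMinimalProjection_of_minimal_finrank (hker : ∀ a, θ a = 0 → π a = 0)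
    {q : A} {η : H} (hsa : IsSelfAdjoint q) (hq : θ.FiniteRank q)
    (hmin : ∀ b, θ.FiniteRank b → finrank ℂ (θ b).range < finrank ℂ (θ q).range → π b η = 0)
    (hη : π q η ≠ 0) : ∃ p, θ.IsMinimalProjection p ∧ π p η ≠ 0 := by
  obtain ⟨r, hr⟩ := exists_real_smul_of_minimal_finrank hq hmin hη hsa fun x => ⟨θ q x, rfl⟩
  have hθsa : IsSelfAdjoint (θ q) := hsa.map θ
  have hr0 : (r : ℂ) ≠ 0 := fun h0 => by
    rw [h0, zero_smul, map_mul] at hr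
    rw [hker q (by simpa [hθsa.star_eq, hr] using CStarRing.star_mul_self_eq_zero_iff (θ q))]
      at hη
    exact hη (zero_apply η)
  have hscalar : ∀ a, IsSelfAdjoint a → ∃ c : ℂ, θ (q * a * q) = c • θ q := fun a ha => by
    obtain ⟨s, hs⟩ := exists_real_smul_of_minimal_finrank hq hmin hη (a := q * a * q)
      (by simpa [hsa.star_eq] using ha.conjugate q) fun x => ⟨θ (a * q * q) x, by simp⟩
    refine ⟨(r : ℂ)⁻¹ * s, ?_⟩
    rw [mul_smul, eq_inv_smul_iff₀ hr0, ← hs, mul_assoc _ q q, map_mul _ (q * a) (q * q), hr,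
      map_mul, mul_smul_comm]
  refine ⟨(r : ℂ)⁻¹ • q, ⟨⟨?_, ?_⟩, ?_, fun a => ?_⟩, by simpa [hr0] using hη⟩
  · rw [IsIdempotentElem, ← map_mul, smul_mul_smul_comm, map_smul, hr, map_smul, smul_smul,
      mul_assoc, inv_mul_cancel₀ hr0, mul_one]
  · exact (IsSelfAdjoint.smul (by simp [isSelfAdjoint_iff]) hsa).map θ
  · simpa using hq.mul_left ((r : ℂ)⁻¹ • 1)
  · obtain ⟨c, hc⟩ := hscalar (ℜ a) (ℜ a).2
    obtain ⟨d, hd⟩ := hscalar (ℑ a) (ℑ a).2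
    refine ⟨(r : ℂ)⁻¹ * (c + Complex.I * d), ?_⟩
    conv_lhs => rw [← realPart_add_I_smul_imaginaryPart a]
    simp only [smul_mul_assoc, mul_smul_comm, mul_add, add_mul, map_add, map_smul, hc, hd,
      smul_add, smul_smul, ← add_smul]
    congr 1
    ring

theorem exists_isMinimalProjection (hker : ∀ a, θ a = 0 → π a = 0) {b : A} {η : H}
    (hb : θ.FiniteRank b) (hη : π b η ≠ 0) : ∃ p, θ.IsMinimalProjection p ∧ π p η ≠ 0 := by
  obtain ⟨c, ⟨hc, hcη⟩, hcmin⟩ := exists_minimalFor_of_wellFoundedLT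
    (fun b => θ.FiniteRank b ∧ π b η ≠ 0) (fun b => finrank ℂ (θ b).range) ⟨b, hb, hη⟩
  refine exists_isMinimalProjection_of_minimal_finrank hker (.star_mul_self c)
    (hc.mul_left (star c)) (fun d hd hlt => ?_) fun h0 => hcη ?_
  · by_contra hdη
    have hltc := hlt.trans_le (hc.finrank_mul_le (star c))
    exact hltc.not_ge (hcmin ⟨hd, hdη⟩ hltc.le)
  · have hnorm := π.inner_star_mul_self c η
    rw [h0, inner_zero_right] at hnorm
    simpa using hnorm.symm

theorem IsMinimalProjection.exists_apply_mul_mul_eq {p b : A} (hp : θ.IsMinimalProjection p)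
    (hb : θ (p * b) ≠ 0) : ∃ d, θ (p * b * d) = θ p := by
  obtain ⟨c, hc⟩ := hp.exists_smul (b * star b)
  have hmul : θ (p * (b * star b) * p) = θ (p * b) * star (θ (p * b)) := by
    simp [map_star, hp.isStarProjection.isSelfAdjoint.star_eq, mul_assoc]
  have hc0 : c ≠ 0 := fun h0 => hb <| by
    rwa [hmul, h0, zero_smul, CStarRing.mul_star_self_eq_zero_iff] at hc
  refine ⟨c⁻¹ • (star b * p), ?_⟩
  rw [mul_smul_comm, map_smul, inv_smul_eq_iff₀ hc0, ← hc]
  simp only [mul_assoc]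

theorem inner_apply_eq_of_mem_range {q q' : A} (hq : IsStarProjection (π q))
    (hq' : IsStarProjection (π q')) {y y' : H} (hy : y ∈ (π q).range) (hy' : y' ∈ (π q').range)
    (a : A) : ⟪y, π a y'⟫_ℂ = ⟪y, π (q * a * q') y'⟫_ℂ := by
  have hfix : π q y = y := apply_eq_self_of_mem_range hq.isIdempotentElem hy
  have hfix' : π q' y' = y' := apply_eq_self_of_mem_range hq'.isIdempotentElem hy'
  conv_lhs => rw [← hfix, ← hfix']
  rw [inner_apply_apply, map_mul, map_mul, map_star, hq.isSelfAdjoint.star_eq, map_mul, map_mul]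

/-- No nonzero operator of `θ(A)` maps the range of `θ q'` to the range of `θ q`. For minimal
projections this means that they are not equivalent in `θ(A)`. -/
def Inequivalent (θ : CRep A K) (q q' : A) : Prop :=
  ∀ a, θ (q * a * q') = 0

theorem Inequivalent.symm {q q' : A} (hq : IsSelfAdjoint (θ q)) (hq' : IsSelfAdjoint (θ q'))
    (h : θ.Inequivalent q q') : θ.Inequivalent q' q := fun a => by
  simpa [map_star, hq.star_eq, hq'.star_eq, mul_assoc] using congrArg star (h (star a))

end CRep

namespace CRepPrec

theorem apply_eq_zero (h : CRepPrec π θ) {a : A} (ha : θ a = 0) : π a = 0 := by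
  ext x
  by_contra hx
  have hx0 : x ≠ 0 := fun h0 => hx (by simp [h0])
  let ξ : H := (‖x‖⁻¹ : ℂ) • x
  have hξ : Orthonormal ℂ fun _ : Fin 1 => ξ :=
    ⟨fun _ => norm_smul_inv_norm hx0, fun i j hij => absurd (Subsingleton.elim i j) hij⟩
  have hpos : 0 < ‖π a ξ‖ ^ 2 := by
    have hne : π a ξ ≠ 0 := by simpa [ξ] using ⟨hx0, hx⟩
    positivity
  obtain ⟨ζ, -, hζ⟩ := h {star a * a} 1 _ hξ _ hpos
  have hlt := hζ _ (Finset.mem_singleton_self _) 0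
  rw [norm_inner_sub_inner_comm, π.inner_star_mul_self, θ.inner_star_mul_self, ha] at hlt
  simp at hlt

theorem apply_eq_apply (h : CRepPrec π θ) {a b : A} (hab : θ a = θ b) : π a = π b := by
  rw [← sub_eq_zero, ← map_sub] at hab ⊢
  exact h.apply_eq_zero hab

theorem isStarProjection (h : CRepPrec π θ) {q : A} (hq : IsStarProjection (θ q)) :
    IsStarProjection (π q) where
  isIdempotentElem := by
    rw [IsIdempotentElem, ← map_mul]
    exact h.apply_eq_apply (by rw [map_mul, hq.isIdempotentElem])
  isSelfAdjoint := by
    rw [isSelfAdjoint_iff, ← map_star]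
    exact h.apply_eq_apply (by rw [map_star, hq.isSelfAdjoint.star_eq])

theorem card_le_finrank (h : CRepPrec π θ) {q : A} (hq : IsStarProjection (θ q))
    (hfin : θ.FiniteRank q) {n : ℕ} {ξ : Fin n → H} (hξ : Orthonormal ℂ ξ)
    (hqξ : ∀ i, ξ i ∈ (π q).range) : n ≤ finrank ℂ (θ q).range := by
  have : FiniteDimensional ℂ (θ q).range := hfin
  obtain ⟨ζ, hζ, happrox⟩ := h {q} n ξ hξ (1 / (n + 1)) (by positivity)
  obtain ⟨_, hproj⟩ := isStarProjection_iff_eq_starProjection_range.1 hq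
  have hdefect : ∀ i, 1 - ‖(θ q).range.starProjection (ζ i)‖ ^ 2 ≤ 1 / (n + 1 : ℝ) := fun i => by
    have hξi : ⟪π q (ξ i), ξ i⟫_ℂ = 1 := by
      rw [apply_eq_self_of_mem_range (h.isStarProjection hq).isIdempotentElem (hqξ i),
        inner_self_eq_norm_sq_to_K, hξ.1 i]
      norm_num
    have hζi : ⟪θ q (ζ i), ζ i⟫_ℂ = ((‖θ q (ζ i)‖ ^ 2 : ℝ) : ℂ) := by
      rw [← θ.inner_star_mul_self, map_mul, map_star, hq.isSelfAdjoint.star_eq,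
        hq.isIdempotentElem, θ.inner_apply_left, map_star, hq.isSelfAdjoint.star_eq]
    have hlt := happrox q (Finset.mem_singleton_self q) i
    rw [hξi, hζi, ← Complex.ofReal_one, ← Complex.ofReal_sub, Complex.norm_real] at hlt
    rw [← hproj]
    exact (le_abs_self _).trans hlt.le
  refine (Fintype.card_fin n).ge.trans (card_le_finrank_of_sum_lt_one hζ _ ?_)
  calc ∑ i, (1 - ‖(θ q).range.starProjection (ζ i)‖ ^ 2)
    _ ≤ ∑ _i : Fin n, 1 / (n + 1 : ℝ) := Finset.sum_le_sum fun i _ => hdefect i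
    _ = n / (n + 1 : ℝ) := by simp [div_eq_mul_inv]
    _ < 1 := (div_lt_one (by positivity)).2 (lt_add_one _)

theorem nonempty_linearIsometry (h : CRepPrec π θ) {q : A} (hq : IsStarProjection (θ q))
    (hfin : θ.FiniteRank q) : Nonempty ((π q).range →ₗᵢ[ℂ] (θ q).range) := by
  have : FiniteDimensional ℂ (θ q).range := hfin
  have hrank : Module.rank ℂ (π q).range ≤ finrank ℂ (θ q).range :=
    rank_le_of_forall_orthonormal fun m ξ hξ =>
      h.card_le_finrank hq hfin (hξ.comp_linearIsometry (π q).range.subtypeₗᵢ) fun i => (ξ i).2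
  have : FiniteDimensional ℂ (π q).range :=
    Module.rank_lt_aleph0_iff.1 (hrank.trans_lt Cardinal.natCast_lt_aleph0)
  exact nonempty_linearIsometry_of_finrank_le (Module.finrank_le_of_rank_le hrank)

theorem inner_linearIsometry_apply (h : CRepPrec π θ) {q : A} (hq : θ.IsMinimalProjection q)
    (W : (π q).range →ₗᵢ[ℂ] (θ q).range) (a : A) (y y' : (π q).range) :
    ⟪(W y : K), θ a (W y')⟫_ℂ = ⟪(y : H), π a y'⟫_ℂ := by
  obtain ⟨c, hc⟩ := hq.exists_smul a
  have hπq := h.isStarProjection hq.isStarProjection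
  have hcπ : π (q * a * q) = c • π q := by
    rw [← map_smul]
    exact h.apply_eq_apply (by rw [map_smul, hc])
  rw [θ.inner_apply_eq_of_mem_range hq.isStarProjection hq.isStarProjection (W y).2 (W y').2,
    π.inner_apply_eq_of_mem_range hπq hπq y.2 y'.2, hc, hcπ, smul_apply, smul_apply,
    apply_eq_self_of_mem_range hq.isStarProjection.isIdempotentElem (W y').2,
    apply_eq_self_of_mem_range hπq.isIdempotentElem y'.2, inner_smul_right, inner_smul_right,
    ← Submodule.coe_inner, W.inner_map_map, Submodule.coe_inner]

theorem coeffApprox_sigma_range (h : CRepPrec π θ) {Q : Set A}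
    (hQ : ∀ q ∈ Q, θ.IsMinimalProjection q) (hpair : Q.Pairwise θ.Inequivalent) :
    CRep.CoeffApprox π θ fun p : Σ q : Q, (π q).range => (p.2 : H) := by
  have W (q : Q) : (π q).range →ₗᵢ[ℂ] (θ q).range :=
    (h.nonempty_linearIsometry (hQ q q.2).isStarProjection (hQ q q.2).finiteRank).some
  refine .of_inner_eq (fun p => (W p.1 p.2 : K)) ?_
  rintro a ⟨q, y⟩ ⟨q', y'⟩
  by_cases hqq : q = q'
  · subst hqq
    exact h.inner_linearIsometry_apply (hQ q q.2) (W q) a y y'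
  · have h0 : θ (q * a * q') = 0 := hpair q.2 q'.2 (Subtype.coe_ne_coe.2 hqq) a
    have hq := (hQ q q.2).isStarProjection
    have hq' := (hQ q' q'.2).isStarProjection
    rw [θ.inner_apply_eq_of_mem_range hq hq' (W q y).2 (W q' y').2,
      π.inner_apply_eq_of_mem_range (h.isStarProjection hq) (h.isStarProjection hq') y.2 y'.2,
      h0, h.apply_eq_zero h0]
    simp

end CRepPrec

theorem exists_subset_pairwise_forall_mem {α : Type*} (s : Set α) (r : α → α → Prop) :
    ∃ t ⊆ s, t.Pairwise r ∧ ∀ p ∈ s, (∀ q ∈ t, r p q ∧ r q p) → p ∈ t := by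
  obtain ⟨t, ht⟩ := zorn_subset {t : Set α | t ⊆ s ∧ t.Pairwise r} fun c hc hchain =>
    ⟨⋃₀ c, ⟨Set.sUnion_subset fun t ht => (hc ht).1,
      (Set.pairwise_sUnion hchain.directedOn).2 fun t ht => (hc ht).2⟩,
      fun t => Set.subset_sUnion_of_mem⟩
  refine ⟨t, ht.prop.1, ht.prop.2, fun p hp hpt => ?_⟩
  have hins : insert p t ⊆ s ∧ (insert p t).Pairwise r :=
    ⟨Set.insert_subset hp ht.prop.1, Set.pairwise_insert.2 ⟨ht.prop.2, fun q hq _ => hpt q hq⟩⟩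
  exact ht.le_of_ge hins (Set.subset_insert p t) (Set.mem_insert p t)

theorem CRepPrec.exists_coeffApprox_cyclicHull (h : CRepPrec π θ) : ∃ G : Set H,
    CRep.CoeffApprox π θ (Subtype.val : π.cyclicHull G → H) ∧
      ∀ b, θ.FiniteRank b → ∀ η ∈ (π.cyclicHull G)ᗮ, π b η = 0 := by
  obtain ⟨Q, hQ, hpair, hmax⟩ :=
    exists_subset_pairwise_forall_mem {q | θ.IsMinimalProjection q} θ.Inequivalent
  let v : (Σ q : Q, (π q).range) → H := fun p => p.2
  refine ⟨Set.range v, (h.coeffApprox_sigma_range hQ hpair).of_mem_cyclicHull Subtype.property,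
    fun b hb η hη => ?_⟩
  by_contra hbη
  have hmem : ∀ q ∈ Q, ∀ x, π q x ∈ π.cyclicHull (Set.range v) := fun q hq x =>
    π.subset_cyclicHull _ ⟨⟨⟨q, hq⟩, π q x, x, rfl⟩, rfl⟩
  obtain ⟨p, hp, hpη⟩ := CRep.exists_isMinimalProjection (fun a => h.apply_eq_zero) hb hbη
  have hp_notMem : π p η ∉ π.cyclicHull (Set.range v) := fun hM =>
    hpη (inner_self_eq_zero.1 ((π.cyclicHull_invariant _).orthogonal p η hη _ hM))
  have hineq : ∀ q ∈ Q, θ.Inequivalent p q := fun q hq a => by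
    by_contra hne
    rw [mul_assoc] at hne
    obtain ⟨d, hd⟩ := hp.exists_apply_mul_mul_eq hne
    refine hp_notMem ?_
    rw [← h.apply_eq_apply hd]
    simpa using π.cyclicHull_invariant _ (p * a) _ (hmem q hq (π d η))
  refine hp_notMem (hmem p (hmax p hp fun q hq => ⟨hineq q hq, ?_⟩) η)
  exact (hineq q hq).symm hp.isStarProjection.isSelfAdjoint (hQ hq).isStarProjection.isSelfAdjoint

end MinimalProjection

section WeakContainment

open InnerProductSpace (gramSchmidtNormed)

variable {A H K : Type*} [CStarAlgebra A]
  [NormedAddCommGroup H] [InnerProductSpace ℂ H] [CompleteSpace H]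
  [NormedAddCommGroup K] [InnerProductSpace ℂ K] [CompleteSpace K]
  {π : CRep A H} {θ : CRep A K}

theorem CRepPrec.coeffApprox (h : CRepPrec π θ) : CRep.CoeffApprox π θ (id : H → H) := by
  classical
  obtain ⟨G, hG, hker⟩ := h.exists_coeffApprox_cyclicHull
  have hhull : ∀ F : Finset H,
      CRep.CoeffApprox π θ (Subtype.val : π.cyclicHull (F ∪ G) → H) := fun F => by
    induction F using Finset.induction_on with
    | empty => rwa [Finset.coe_empty, Set.empty_union]
    | insert x F _ ih =>
      rw [Finset.coe_insert, Set.insert_union]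
      refine ih.cyclicHull_insert (fun η hη => ?_) x
      have hηG := Submodule.orthogonal_le (π.cyclicHull_mono Set.subset_union_right) hη
      exact CRep.vectorFunctional_mem_singularCone π θ fun b hb => hker b hb η hηG
  exact .of_forall_finset fun F => (hhull F).comp fun x : F =>
    ⟨x, π.subset_cyclicHull _ (Or.inl x.2)⟩

theorem CRep.CoeffApprox.exists_orthonormal {ι : Type*} [LinearOrder ι] [LocallyFiniteOrderBot ι]
    [Finite ι] {ξ : ι → H} (h : CoeffApprox π θ ξ) (hξ : Orthonormal ℂ ξ) (Ω : Finset A) {ε : ℝ}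
    (hε : 0 < ε) : ∃ ζ : ι → K, Orthonormal ℂ ζ ∧
      ∀ a ∈ Ω, ∀ i, ‖⟪ξ i, π a (ξ i)⟫_ℂ - ⟪ζ i, θ a (ζ i)⟫_ℂ‖ < ε := by
  obtain ⟨l, hl, hlim⟩ := h
  have hgram : ∀ i j, Tendsto (fun y : ι → K => ⟪y i, y j⟫_ℂ) l (𝓝 (if i = j then 1 else 0)) :=
    fun i j => by simpa [orthonormal_iff_ite.1 hξ i j] using hlim 1 i j
  have hcoeff : ∀ a i, Tendsto (fun y : ι → K => ⟪gramSchmidtNormed ℂ y i,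
      θ a (gramSchmidtNormed ℂ y i)⟫_ℂ) l (𝓝 ⟪ξ i, π a (ξ i)⟫_ℂ) := fun a i =>
    tendsto_inner_apply_of_tendsto_sub (θ a)
      (tendsto_norm_of_tendsto_inner_self (𝕜 := ℂ) (f := fun y : ι → K => y i)
        (by simpa using hgram i i))
      (tendsto_gramSchmidtNormed_sub hgram i) (hlim a i i)
  have hclose : ∀ᶠ y : ι → K in l, ∀ a ∈ Ω, ∀ i, ‖⟪ξ i, π a (ξ i)⟫_ℂ -
      ⟪gramSchmidtNormed ℂ y i, θ a (gramSchmidtNormed ℂ y i)⟫_ℂ‖ < ε :=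
    (eventually_all_finset Ω).2 fun a _ => eventually_all.2 fun i =>
      by simpa only [dist_eq_norm'] using Metric.tendsto_nhds.1 (hcoeff a i) ε hε
  obtain ⟨y, hy, hyclose⟩ := ((eventually_orthonormal_gramSchmidtNormed hgram).and hclose).exists
  exact ⟨gramSchmidtNormed ℂ y, hy, hyclose⟩

theorem CRep.CoeffApprox.prec (h : CoeffApprox π θ (id : H → H)) : CRepPrec π θ :=
  fun Ω n ξ hξ ε hε => by
    obtain ⟨ζ, hζ, hclose⟩ := (h.comp ξ).exists_orthonormal hξ Ω hε
    refine ⟨ζ, hζ, fun a ha i => ?_⟩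
    rw [norm_inner_sub_inner_comm]
    exact hclose a ha i

end WeakContainment

section DirectSum

variable {A HH KK ι : Type*} [CStarAlgebra A] {Hs Ks : ι → Type*}
  [∀ i, NormedAddCommGroup (Hs i)] [∀ i, InnerProductSpace ℂ (Hs i)] [∀ i, CompleteSpace (Hs i)]
  [∀ i, NormedAddCommGroup (Ks i)] [∀ i, InnerProductSpace ℂ (Ks i)] [∀ i, CompleteSpace (Ks i)]
  [NormedAddCommGroup HH] [InnerProductSpace ℂ HH] [CompleteSpace HH]
  [NormedAddCommGroup KK] [InnerProductSpace ℂ KK] [CompleteSpace KK]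
  {σH : CRep A HH} {π : ∀ i, CRep A (Hs i)} {uH : ∀ i, Hs i →ₗᵢ[ℂ] HH}
  {σK : CRep A KK} {θ : ∀ i, CRep A (Ks i)} {uK : ∀ i, Ks i →ₗᵢ[ℂ] KK}

namespace IsDirectSumRep

theorem inner_apply_self (hσ : IsDirectSumRep σH π uH) (a : A) (i : ι) (x y : Hs i) :
    ⟪uH i x, σH a (uH i y)⟫_ℂ = ⟪x, π i a y⟫_ℂ := by
  rw [hσ.2.2, (uH i).inner_map_map]

theorem inner_apply_of_ne (hσ : IsDirectSumRep σH π uH) (a : A) {i j : ι} (hij : i ≠ j) (x : Hs i)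
    (y : Hs j) : ⟪uH i x, σH a (uH j y)⟫_ℂ = 0 := by
  rw [hσ.2.2, hσ.1 i j hij]

theorem mem_cyclicHull (hσ : IsDirectSumRep σH π uH) (x : HH) :
    x ∈ σH.cyclicHull (Set.range fun p : Σ i, Hs i => uH p.1 p.2) := by
  have hle : ⨆ i, LinearMap.range (uH i).toLinearMap ≤
      σH.cyclicHull (Set.range fun p : Σ i, Hs i => uH p.1 p.2) := iSup_le fun i => by
    rintro _ ⟨y, rfl⟩
    exact σH.subset_cyclicHull _ ⟨⟨i, y⟩, rfl⟩
  exact Submodule.topologicalClosure_minimal _ hle (σH.isClosed_cyclicHull _)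
    (hσ.2.1 ▸ Submodule.mem_top)

theorem coeffApprox (hσH : IsDirectSumRep σH π uH) (hσK : IsDirectSumRep σK θ uK)
    (h : ∀ i, CRep.CoeffApprox (π i) (θ i) (id : Hs i → Hs i)) :
    CRep.CoeffApprox σH σK (id : HH → HH) := by
  choose l hl hlim using h
  have hsummands : CRep.CoeffApprox σH σK fun p : Σ i, Hs i => uH p.1 p.2 := by
    refine .of_tendsto (l := Filter.pi l) inferInstance (fun y p => uK p.1 (y p.1 p.2)) ?_
    rintro a ⟨i, x⟩ ⟨j, x'⟩
    by_cases hij : i = j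
    · subst hij
      simp only [hσH.inner_apply_self, hσK.inner_apply_self]
      exact (hlim i a x x').comp (tendsto_eval_pi l i)
    · simp only [hσH.inner_apply_of_ne a hij, hσK.inner_apply_of_ne a hij]
      exact tendsto_const_nhds
  exact hsummands.of_mem_cyclicHull hσH.mem_cyclicHull

end IsDirectSumRep

end DirectSum

theorem prec_directSum_of_prec_general
    {A : Type*} [CStarAlgebra A] {ι : Type*}
    {Hs Ks : ι → Type*}
    [∀ i, NormedAddCommGroup (Hs i)] [∀ i, InnerProductSpace ℂ (Hs i)]
    [∀ i, CompleteSpace (Hs i)]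
    [∀ i, NormedAddCommGroup (Ks i)] [∀ i, InnerProductSpace ℂ (Ks i)]
    [∀ i, CompleteSpace (Ks i)]
    {HH KK : Type*} [NormedAddCommGroup HH] [InnerProductSpace ℂ HH] [CompleteSpace HH]
    [NormedAddCommGroup KK] [InnerProductSpace ℂ KK] [CompleteSpace KK]
    (π : ∀ i, CRep A (Hs i)) (θ : ∀ i, CRep A (Ks i))
    (hprec : ∀ i, CRepPrec (π i) (θ i))
    (σH : CRep A HH) (uH : ∀ i, Hs i →ₗᵢ[ℂ] HH) (hσH : IsDirectSumRep σH π uH)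
    (σK : CRep A KK) (uK : ∀ i, Ks i →ₗᵢ[ℂ] KK) (hσK : IsDirectSumRep σK θ uK) :
    CRepPrec σH σK :=
  (hσH.coeffApprox hσK fun i => (hprec i).coeffApprox).prec

/-- weak containment `≺` is compatible with countable direct sums: if
`π_i ≺ θ_i` for every `i` in a countable index set, then `⊕ᵢ π_i ≺ ⊕ᵢ θ_i`. -/
theorem prec_directSum_of_prec
    {A : Type*} [CStarAlgebra A] {ι : Type*} [Countable ι]
    {Hs Ks : ι → Type*}
    [∀ i, NormedAddCommGroup (Hs i)] [∀ i, InnerProductSpace ℂ (Hs i)]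
    [∀ i, CompleteSpace (Hs i)]
    [∀ i, NormedAddCommGroup (Ks i)] [∀ i, InnerProductSpace ℂ (Ks i)]
    [∀ i, CompleteSpace (Ks i)]
    {HH KK : Type*} [NormedAddCommGroup HH] [InnerProductSpace ℂ HH] [CompleteSpace HH]
    [NormedAddCommGroup KK] [InnerProductSpace ℂ KK] [CompleteSpace KK]
    (π : ∀ i, CRep A (Hs i)) (θ : ∀ i, CRep A (Ks i))
    (hprec : ∀ i, CRepPrec (π i) (θ i))
    (σH : CRep A HH) (uH : ∀ i, Hs i →ₗᵢ[ℂ] HH) (hσH : IsDirectSumRep σH π uH)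
    (σK : CRep A KK) (uK : ∀ i, Ks i →ₗᵢ[ℂ] KK) (hσK : IsDirectSumRep σK θ uK) :
    CRepPrec σH σK :=
  prec_directSum_of_prec_general π θ hprec σH uH hσH σK uK hσK
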